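/- For any generating function g, any witness function t, any sets 𝒫_g and 𝒫_t of p-conditions, and any disjunctive logic program Π, the two-layer template graph ST[𝒫_g, 𝒫_t, g, t](Π) is finite and acyclic. -/

import Mathlib

/-!
A record over finitely many atoms repeats no content, so there are only finitely many of them; this
gives finitely many states, once one notices that `atoms(t, Π, X)` is a finite union because a
finite `X` carries finitely many sets of literals.

For acyclicity, read a record as a word over `decision < non-decision`. Appending an element passes
to a proper extension, and backtracking replaces a decision by a non-decision while discarding what
follows it; both increase the word lexicographically. A state `(L, R)_s` is then measured
lexicographically by `L`, by its label with `𝓛 < 𝓡`, and by `R`: crossing to `𝓡` increases the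
label, and the one rule that discards `R` and returns to `𝓛` backtracks in `L`.
-/

open scoped Classical

namespace AbstractSolvers

/-- Literals over atoms (natural numbers): an atom `a` or its negation `¬ a`. -/
inductive Lit where
  | pos : ℕ → Lit
  | neg : ℕ → Lit
deriving DecidableEq

/-- The complement of a literal. -/
def Lit.comp : Lit → Lit
  | .pos a => .neg a
  | .neg a => .pos a

/-- The atom of a literal. -/
def Lit.atom : Lit → ℕ
  | .pos a => a
  | .neg a => a

def Lit.isPos : Lit → Bool
  | .pos _ => true
  | .neg _ => false

/-- A disjunctive rule `A ← B`: a head `A` (disjunction of atoms) and a body with a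
positive part (atoms) and a negative part (atoms under negation as failure). -/
structure Rule where
  head : Finset ℕ
  pos : Finset ℕ
  neg : Finset ℕ
deriving DecidableEq

/-- A disjunctive logic program: a finite set of disjunctive rules. -/
abbrev Prog := Finset Rule

def Rule.atoms (r : Rule) : Finset ℕ := r.head ∪ r.pos ∪ r.neg

/-- The atoms occurring in a program. -/
def progAtoms (π : Prog) : Finset ℕ := π.sup Rule.atoms

/-- The atoms occurring in a set of literals. -/
def atomsOfSet (M : Set Lit) : Set ℕ := Lit.atom '' M

/-- A set of literals is consistent if it contains no literal together with its complement. -/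
def consistentSet (M : Set Lit) : Prop := ∀ l ∈ M, Lit.comp l ∉ M

/-- `M⁺`: the atoms occurring positively in `M`. -/
def posAtoms (M : Set Lit) : Set ℕ := {a | Lit.pos a ∈ M}

/-- The restriction of a set of literals to a set of atoms. -/
def restrictTo (M : Set Lit) (X : Set ℕ) : Set Lit := {l | l ∈ M ∧ Lit.atom l ∈ X}

/-- `M` is a complete set of literals over `X` if the atoms of `M` are exactly `X`. -/
def completeOver (M : Set Lit) (X : Set ℕ) : Prop := atomsOfSet M = X

/-- The clause `A ∨ B̄` corresponding to a rule `A ← B` (as its set of literals). -/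
def Rule.clause (r : Rule) : Set Lit :=
  (Lit.pos '' ↑r.head) ∪ (Lit.neg '' ↑r.pos) ∪ (Lit.pos '' ↑r.neg)

/-- `M` satisfies the rule `r` viewed as a clause. -/
def satRule (M : Set Lit) (r : Rule) : Prop := ∃ l ∈ Rule.clause r, l ∈ M

/-- A classical model of a program: a consistent and complete set of literals over the atoms
of the program satisfying every rule viewed as a clause. -/
def claModel (π : Prog) (M : Set Lit) : Prop :=
  consistentSet M ∧ completeOver M ↑(progAtoms π) ∧ ∀ r ∈ π, satRule M r

/-- `r` (of the form `A ∨ a ← B`) is a supporting rule for `a` with respect to `M`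
when `M ∩ (B̄ ∪ A) = ∅`. -/
def supportingRule (r : Rule) (a : ℕ) (M : Set Lit) : Prop :=
  a ∈ r.head ∧ (∀ b ∈ r.pos, Lit.neg b ∉ M) ∧ (∀ b ∈ r.neg, Lit.pos b ∉ M) ∧
    ∀ b ∈ r.head, b ≠ a → Lit.pos b ∉ M

/-- A supported model of a program. -/
def supModel (π : Prog) (M : Set Lit) : Prop :=
  claModel π M ∧ ∀ a, Lit.pos a ∈ M → ∃ r ∈ π, supportingRule r a M

/-- `X` satisfies the reduct `π^Y`. -/
def satReduct (π : Prog) (Y X : Set ℕ) : Prop :=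
  ∀ r ∈ π, (∀ b ∈ r.neg, b ∉ Y) → (∀ b ∈ r.pos, b ∈ X) → ∃ a ∈ r.head, a ∈ X

/-- `X` is an answer set of `π`: `X` is minimal among the sets of atoms satisfying `π^X`. -/
def answerSet (π : Prog) (X : Set ℕ) : Prop :=
  satReduct π X X ∧ ∀ Y ⊆ X, satReduct π X Y → Y = X

/-- A stable model of a program: a consistent and complete set `M` of literals over the atoms
of the program such that `M⁺` is an answer set. -/
def staModel (π : Prog) (M : Set Lit) : Prop :=
  consistentSet M ∧ completeOver M ↑(progAtoms π) ∧ answerSet π (posAtoms M)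

/-- `X` is unfounded on `L` with respect to `π`. -/
def unfounded (π : Prog) (L : Set Lit) (X : Set ℕ) : Prop :=
  ∀ a ∈ X, ∀ r ∈ π, a ∈ r.head →
    ((∃ b ∈ r.pos, Lit.neg b ∈ L) ∨ (∃ b ∈ r.neg, Lit.pos b ∈ L)) ∨
    (∃ b ∈ r.pos, b ∈ X) ∨
    (∃ b ∈ r.head, b ∉ X ∧ Lit.pos b ∈ L)

/-- The three types of models: classical, supported-, and stable. -/
inductive MType where
  | cla | sup | sta

/-- `w`-models. -/
def isModel : MType → Prog → Set Lit → Prop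
  | .cla => claModel
  | .sup => supModel
  | .sta => staModel

/-- A propagator condition (`p-condition`) maps a program and a set of literals to a set of
literals. -/
abbrev PCond := Prog → Set Lit → Set Lit

/-- A p-condition yields literals over the atoms of the program. -/
def isPCondition (p : PCond) : Prop :=
  ∀ (π : Prog) (M : Set Lit), ∀ l ∈ p π M, Lit.atom l ∈ progAtoms π

/-- The union of the outcomes of a set of p-conditions. -/
def pcOut (P : Set PCond) (π : Prog) (M : Set Lit) : Set Lit := ⋃ p ∈ P, p π M

/-- The `UnitPropagate` p-condition. -/
def unitPropagate : PCond := fun π L =>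
  {l | l ∉ L ∧ ∃ r ∈ π, l ∈ Rule.clause r ∧ ∀ l' ∈ Rule.clause r, l' ≠ l → Lit.comp l' ∈ L}

/-- The `AllRulesCancelled` p-condition. -/
def allRulesCancelled : PCond := fun π L =>
  {l | ∃ a, l = Lit.neg a ∧ Lit.neg a ∉ L ∧ ∀ r ∈ π, ¬ supportingRule r a L}

/-- The `BackchainTrue` p-condition. -/
def backchainTrue : PCond := fun π L =>
  {l | l ∉ L ∧ ∃ r ∈ π, ∃ a ∈ r.head, Lit.pos a ∈ L ∧
    ((∃ b ∈ r.head, b ≠ a ∧ l = Lit.neg b) ∨ (∃ b ∈ r.pos, l = Lit.pos b) ∨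
      (∃ b ∈ r.neg, l = Lit.neg b)) ∧
    ∀ r' ∈ π, r' ≠ r → ¬ supportingRule r' a L}

/-- The `Unfounded` p-condition. -/
def unfoundedCond : PCond := fun π L =>
  {l | ∃ a, l = Lit.neg a ∧ Lit.neg a ∉ L ∧ consistentSet L ∧
    ∃ X : Set ℕ, a ∈ X ∧ unfounded π L X}

/-- `up = {UnitPropagate}`. -/
def up : Set PCond := {unitPropagate}

/-- `sd = {UnitPropagate, AllRulesCancelled, BackchainTrue}`. -/
def sd : Set PCond := {unitPropagate, allRulesCancelled, backchainTrue}

/-- `sm = {UnitPropagate, AllRulesCancelled, BackchainTrue, Unfounded}`. -/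
def sm : Set PCond := {unitPropagate, allRulesCancelled, backchainTrue, unfoundedCond}

/-- `P` is `w`-sound. -/
def wSound (w : MType) (P : Set PCond) : Prop :=
  ∀ (π : Prog) (M M₁ : Set Lit), isModel w π M₁ → M ⊆ M₁ → pcOut P π M ⊆ M₁

/-- `P` is `w`-complete. -/
def wComplete (w : MType) (P : Set PCond) : Prop :=
  ∀ (π : Prog) (M : Set Lit), consistentSet M → completeOver M ↑(progAtoms π) →
    (isModel w π M ↔ pcOut P π M = ∅)

/-- `P` is `w`-enforcing: both `w`-sound and `w`-complete. -/
def wEnforcing (w : MType) (P : Set PCond) : Prop := wSound w P ∧ wComplete w P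

abbrev GenFun := Prog → Prog
abbrev WitFun := Prog → Set Lit → Prog

/-- `M` covers `π` when `atoms(π) ⊆ atoms(M)`. -/
def covers (M : Set Lit) (π : Prog) : Prop := (↑(progAtoms π) : Set ℕ) ⊆ atomsOfSet M

/-- A generating (program) function. -/
def isGenFun (g : GenFun) : Prop :=
  ∀ π : Prog, (↑(progAtoms π) : Set ℕ) ⊆ (↑(progAtoms (g π)) : Set ℕ)

/-- A witness (program) function: on consistent covering sets of literals it yields
a non-disjunctive program. -/
def isWitFun (t : WitFun) : Prop :=
  ∀ (π : Prog) (M : Set Lit), consistentSet M → covers M π → ∀ r ∈ t π M, r.head.card ≤ 1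

/-- `g` is `w₁`-approximating with respect to `w`. -/
def approximating (w₁ w : MType) (g : GenFun) : Prop :=
  ∀ π : Prog,
    (∀ L, staModel π L → ∃ L₁, isModel w₁ (g π) L₁ ∧ L = restrictTo L₁ ↑(progAtoms π)) ∧
    (∀ M, isModel w₁ (g π) M → isModel w π (restrictTo M ↑(progAtoms π)))

/-- `t` is `w₁`-ensuring with respect to `w`. -/
def ensuring (w₁ w : MType) (t : WitFun) : Prop :=
  ∀ (π : Prog) (M : Set Lit), covers M π →
    isModel w π (restrictTo M ↑(progAtoms π)) →
    (staModel π (restrictTo M ↑(progAtoms π)) ↔ ¬ ∃ N, isModel w₁ (t π M) N)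

/-- `(P, g)` is an approximating-pair with respect to `w`. -/
def approximatingPair (w : MType) (P : Set PCond) (g : GenFun) : Prop :=
  ∃ w₁, wEnforcing w₁ P ∧ approximating w₁ w g

/-- `(P, t)` is an ensuring-pair with respect to `w`. -/
def ensuringPair (w : MType) (P : Set PCond) (t : WitFun) : Prop :=
  ∃ w₁, wEnforcing w₁ P ∧ ensuring w₁ w t

/-- An element of a record: a literal annotated as decision (`true`) or not, or `⊥`. -/
inductive RElem where
  | lit : Lit → Bool → RElem
  | bot : RElem
deriving DecidableEq

/-- A record is a string (list) of such elements. -/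
abbrev Record := List RElem

def RElem.content : RElem → Option Lit
  | .lit l _ => some l
  | .bot => none

/-- The literal `l` occurs in the record `L` (possibly as a decision literal). -/
def Record.hasLit (L : Record) (l : Lit) : Prop := ∃ d, RElem.lit l d ∈ L

/-- The set of literals of a record. -/
def Record.lits (L : Record) : Set Lit := {l | Record.hasLit L l}

/-- A record is inconsistent if it contains `⊥` or complementary literals. -/
def Record.incons (L : Record) : Prop :=
  RElem.bot ∈ L ∨ ∃ l, Record.hasLit L l ∧ Record.hasLit L (Lit.comp l)

/-- The record contains no decision literals. -/
def Record.noDec (L : Record) : Prop := ∀ l, RElem.lit l true ∉ L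

/-- A record relative to the set `X` of atoms: no repetitions, and all literals over `X`. -/
def Record.wf (L : Record) (X : Set ℕ) : Prop :=
  (L.map RElem.content).Nodup ∧ ∀ l, Record.hasLit L l → Lit.atom l ∈ X

/-- An abstract transition graph, with a distinguished initial node, a `Failstate`,
and `Ok(L)` nodes. -/
structure AbsGraph (σ : Type) where
  nodes : Set σ
  step : σ → σ → Prop
  init : σ
  fail : σ
  okP : σ → Prop
  okLits : σ → Set Lit

/-- The edges of the graph: steps between nodes of the graph. -/
def AbsGraph.edge {σ : Type} (G : AbsGraph σ) (s s' : σ) : Prop :=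
  s ∈ G.nodes ∧ s' ∈ G.nodes ∧ G.step s s'

/-- The atoms of a family of sets of literals. -/
def atomsOfFam (N : Set (Set Lit)) : Set ℕ := ⋃ M ∈ N, atomsOfSet M

/-- The graph `G` checks the set `N` of sets of literals. -/
def checks {σ : Type} (G : AbsGraph σ) (N : Set (Set Lit)) : Prop :=
  G.nodes.Finite ∧
  (∀ s : σ, ¬ Relation.TransGen G.edge s s) ∧
  (∀ s ∈ G.nodes, (∀ s', ¬ G.edge s s') → s = G.fail ∨ G.okP s) ∧
  (∀ s : σ, Relation.ReflTransGen G.edge G.init s → G.okP s →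
    restrictTo (G.okLits s) (atomsOfFam N) ∈ N) ∧
  (Relation.ReflTransGen G.edge G.init G.fail ↔ N = ∅)

/-- Applicability of the `Conclude` rule. -/
def concludeApp (L : Record) : Prop := Record.incons L ∧ Record.noDec L

/-- Applicability of the `Backtrack` rule. -/
def backtrackApp (L : Record) : Prop :=
  ∃ L₁ l L₂, L = L₁ ++ RElem.lit l true :: L₂ ∧ Record.incons L ∧ Record.noDec L₂

/-- Applicability of the `Propagate` rule for the set `P` of p-conditions. -/
def propagateApp (P : Set PCond) (π : Prog) (L : Record) : Prop :=
  ∃ l, l ∈ pcOut P π (Record.lits L)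

/-- Applicability of the `Decide` rule over the atoms `X`. -/
def decideApp (X : Finset ℕ) (L : Record) : Prop :=
  ¬ Record.incons L ∧ ∃ l : Lit, Lit.atom l ∈ X ∧ ¬ Record.hasLit L l ∧
    ¬ Record.hasLit L (Lit.comp l)

/-- Basic states: records, `Ok(L)` states, and the `Failstate`. -/
inductive BState where
  | rcd : Record → BState
  | ok : Record → BState
  | fail : BState

/-- The transition rules of the single-layer DPLL graph template `DPT_P(π)`
(`Conclude`, `Backtrack`, `Propagate`, `Decide`, `Success`). -/
inductive dptStep (P : Set PCond) (π : Prog) : BState → BState → Prop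
  | conclude (L : Record) : Record.incons L → Record.noDec L →
      dptStep P π (BState.rcd L) BState.fail
  | backtrack (L₁ : Record) (l : Lit) (L₂ : Record) :
      Record.incons (L₁ ++ RElem.lit l true :: L₂) → Record.noDec L₂ →
      dptStep P π (BState.rcd (L₁ ++ RElem.lit l true :: L₂))
        (BState.rcd (L₁ ++ [RElem.lit (Lit.comp l) false]))
  | propagate (L : Record) (l : Lit) : l ∈ pcOut P π (Record.lits L) →
      dptStep P π (BState.rcd L) (BState.rcd (L ++ [RElem.lit l false]))
  | decide (L : Record) (l : Lit) : ¬ Record.incons L → Lit.atom l ∈ progAtoms π →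
      ¬ Record.hasLit L l → ¬ Record.hasLit L (Lit.comp l) →
      dptStep P π (BState.rcd L) (BState.rcd (L ++ [RElem.lit l true]))
  | success (L : Record) :
      ¬ (concludeApp L ∨ backtrackApp L ∨ propagateApp P π L ∨ decideApp (progAtoms π) L) →
      dptStep P π (BState.rcd L) (BState.ok L)

/-- The single-layer DPLL graph template `DPT_P(π)`; with `P = up` it is the graph `DP_π`. -/
def DPT (P : Set PCond) (π : Prog) : AbsGraph BState where
  nodes := {s | match s with
    | BState.rcd L => Record.wf L ↑(progAtoms π)
    | BState.ok L => Record.wf L ↑(progAtoms π)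
    | BState.fail => True}
  step := dptStep P π
  init := BState.rcd []
  fail := BState.fail
  okP := fun s => ∃ L, s = BState.ok L
  okLits := fun s => match s with
    | BState.ok L => Record.lits L
    | BState.rcd L => Record.lits L
    | BState.fail => ∅

/-- States of the two-layer graph: `(L,R)_s` (label `true` = 𝓛, `false` = 𝓡),
`Ok(L)`, and `Failstate`. -/
inductive TLState where
  | st : Record → Record → Bool → TLState
  | ok : Record → TLState
  | fail : TLState

/-- `atoms(t, π, X)`: the union of the atoms of `t(π,L)` over all consistent and complete
sets `L` of literals over `X`. -/
def witAtoms (t : WitFun) (π : Prog) (X : Set ℕ) : Set ℕ :=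
  ⋃ L ∈ {L : Set Lit | consistentSet L ∧ completeOver L X}, (↑(progAtoms (t π L)) : Set ℕ)

/-- Some left-rule applies to the state `(L, ∅)_𝓛`. -/
def leftApp (P : Set PCond) (gπ : Prog) (L : Record) : Prop :=
  concludeApp L ∨ backtrackApp L ∨ propagateApp P gπ L ∨ decideApp (progAtoms gπ) L

/-- Some right-rule applies to the state `(L, R)_𝓡` (where `tπ` is the witness program
for `L`). -/
def rightApp (P : Set PCond) (tπ : Prog) (R : Record) : Prop :=
  concludeApp R ∨ backtrackApp R ∨ propagateApp P tπ R ∨ decideApp (progAtoms tπ) R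

/-- The transition rules of the two-layer template graph `ST[PL, PR, g, t](π)`. -/
inductive tlStep (PL PR : Set PCond) (g : GenFun) (t : WitFun) (π : Prog) :
    TLState → TLState → Prop
  | concludeL (L : Record) : Record.incons L → Record.noDec L →
      tlStep PL PR g t π (TLState.st L [] true) TLState.fail
  | backtrackL (L₁ : Record) (l : Lit) (L₂ : Record) :
      Record.incons (L₁ ++ RElem.lit l true :: L₂) → Record.noDec L₂ →
      tlStep PL PR g t π (TLState.st (L₁ ++ RElem.lit l true :: L₂) [] true)
        (TLState.st (L₁ ++ [RElem.lit (Lit.comp l) false]) [] true)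
  | propagateL (L : Record) (l : Lit) : l ∈ pcOut PL (g π) (Record.lits L) →
      tlStep PL PR g t π (TLState.st L [] true)
        (TLState.st (L ++ [RElem.lit l false]) [] true)
  | decideL (L : Record) (l : Lit) : ¬ Record.incons L → Lit.atom l ∈ progAtoms (g π) →
      ¬ Record.hasLit L l → ¬ Record.hasLit L (Lit.comp l) →
      tlStep PL PR g t π (TLState.st L [] true)
        (TLState.st (L ++ [RElem.lit l true]) [] true)
  | cross (L : Record) : ¬ leftApp PL (g π) L →
      tlStep PL PR g t π (TLState.st L [] true) (TLState.st L [] false)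
  | concludeR (L R : Record) : Record.incons R → Record.noDec R →
      tlStep PL PR g t π (TLState.st L R false) (TLState.ok L)
  | backtrackR (L R₁ : Record) (l : Lit) (R₂ : Record) :
      Record.incons (R₁ ++ RElem.lit l true :: R₂) → Record.noDec R₂ →
      tlStep PL PR g t π (TLState.st L (R₁ ++ RElem.lit l true :: R₂) false)
        (TLState.st L (R₁ ++ [RElem.lit (Lit.comp l) false]) false)
  | propagateR (L R : Record) (l : Lit) :
      l ∈ pcOut PR (t π (Record.lits L)) (Record.lits R) →
      tlStep PL PR g t π (TLState.st L R false)
        (TLState.st L (R ++ [RElem.lit l false]) false)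
  | decideR (L R : Record) (l : Lit) : ¬ Record.incons R →
      Lit.atom l ∈ progAtoms (t π (Record.lits L)) →
      ¬ Record.hasLit R l → ¬ Record.hasLit R (Lit.comp l) →
      tlStep PL PR g t π (TLState.st L R false)
        (TLState.st L (R ++ [RElem.lit l true]) false)
  | concludeRL (L R : Record) : ¬ rightApp PR (t π (Record.lits L)) R → Record.noDec L →
      tlStep PL PR g t π (TLState.st L R false) TLState.fail
  | backtrackRL (L₁ : Record) (l : Lit) (L₂ R : Record) :
      ¬ rightApp PR (t π (Record.lits (L₁ ++ RElem.lit l true :: L₂))) R →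
      Record.noDec L₂ →
      tlStep PL PR g t π (TLState.st (L₁ ++ RElem.lit l true :: L₂) R false)
        (TLState.st (L₁ ++ [RElem.lit (Lit.comp l) false]) [] true)

/-- The two-layer template graph `ST[PL, PR, g, t](π)`. -/
def TL (PL PR : Set PCond) (g : GenFun) (t : WitFun) (π : Prog) : AbsGraph TLState where
  nodes := {s | match s with
    | TLState.st L R _ => Record.wf L ↑(progAtoms (g π)) ∧
        Record.wf R (witAtoms t π ↑(progAtoms (g π)))
    | TLState.ok L => Record.wf L ↑(progAtoms (g π))
    | TLState.fail => True}
  step := tlStep PL PR g t π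
  init := TLState.st [] [] true
  fail := TLState.fail
  okP := fun s => ∃ L, s = TLState.ok L
  okLits := fun s => match s with
    | TLState.ok L => Record.lits L
    | TLState.st L _ _ => Record.lits L
    | TLState.fail => ∅

/-- The rule corresponding to a clause with positive atoms `P` and negated atoms `N`,
under the identification of CNF formulas with programs. -/
def mkClause (P N : Finset ℕ) : Rule := ⟨∅, N, P⟩

section Finiteness

theorem finite_setOf_nodup_of_forall_mem {α : Type*} {s : Set α} (hs : s.Finite) :
    {l : List α | l.Nodup ∧ ∀ a ∈ l, a ∈ s}.Finite := by
  have := hs.fintype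
  refine ((List.finite_length_le s (Fintype.card s)).image (List.map Subtype.val)).subset ?_
  rintro l ⟨hnodup, hmem⟩
  lift l to List s using hmem
  exact ⟨l, hnodup.of_map.length_le_card, rfl⟩

variable {X : Set ℕ}

theorem Lit.finite_atom_preimage (hX : X.Finite) : (Lit.atom ⁻¹' X).Finite := by
  refine ((hX.image Lit.pos).union (hX.image Lit.neg)).subset ?_
  rintro (a | a) ha
  exacts [.inl ⟨a, ha, rfl⟩, .inr ⟨a, ha, rfl⟩]

theorem Record.finite_setOf_wf (hX : X.Finite) : {L : Record | L.wf X}.Finite := by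
  have helems : (insert RElem.bot (Set.image2 RElem.lit (Lit.atom ⁻¹' X) Set.univ)).Finite :=
    ((Lit.finite_atom_preimage hX).image2 _ Set.finite_univ).insert _
  refine (finite_setOf_nodup_of_forall_mem helems).subset ?_
  rintro L ⟨hnodup, hatom⟩
  refine ⟨hnodup.of_map, ?_⟩
  rintro (⟨l, d⟩ | _) he
  exacts [.inr ⟨l, hatom l ⟨d, he⟩, d, trivial, rfl⟩, .inl rfl]

theorem finite_setOf_completeOver (hX : X.Finite) : {M : Set Lit | completeOver M X}.Finite :=
  (Lit.finite_atom_preimage hX).finite_subsets.subset fun _ hM ↦ Set.image_subset_iff.1 hM.subset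

theorem finite_witAtoms (t : WitFun) (π : Prog) (hX : X.Finite) : (witAtoms t π X).Finite :=
  ((finite_setOf_completeOver hX).subset fun _ hM ↦ hM.2).biUnion
    fun M _ ↦ (progAtoms (t π M)).finite_toSet

theorem TL.finite_nodes (PL PR : Set PCond) (g : GenFun) (t : WitFun) (π : Prog) :
    (TL PL PR g t π).nodes.Finite := by
  have hatoms := (progAtoms (g π)).finite_toSet
  have hleft := Record.finite_setOf_wf hatoms
  have hright := Record.finite_setOf_wf (finite_witAtoms t π hatoms)
  have hpairs (b : Bool) := hleft.image2 (TLState.st · · b) hright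
  refine ((((hpairs true).union (hpairs false)).union (hleft.image TLState.ok)).insert
    TLState.fail).subset ?_
  rintro (⟨L, R, _ | _⟩ | L | _) hs
  exacts [.inr (.inl (.inr ⟨L, hs.1, R, hs.2, rfl⟩)), .inr (.inl (.inl ⟨L, hs.1, R, hs.2, rfl⟩)),
    .inr (.inr ⟨L, hs, rfl⟩), .inl rfl]

end Finiteness

section Acyclicity

theorem AbsGraph.acyclic_of_step_lt {σ : Type} {β : Type*} [Preorder β] (G : AbsGraph σ)
    (f : σ → β) (hf : ∀ s s', G.step s s' → f s < f s') (s : σ) :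
    ¬ Relation.TransGen G.edge s s := by
  intro hcycle
  have hlt : Relation.TransGen (· < ·) (f s) (f s) :=
    hcycle.lift f fun s s' hedge ↦ hf s s' hedge.2.2
  rw [Relation.transGen_eq_self] at hlt
  exact lt_irrefl _ hlt

/-- Whether an element of a record is not a decision literal. In the order `false < true` decision
literals come first. -/
def RElem.isNonDecision : RElem → Bool
  | .lit _ d => !d
  | .bot => true

/-- The word over `Bool` recording which elements of a record are decisions. Words are compared
lexicographically, a proper prefix being smaller than its extensions. -/
def Record.decisionWord (L : Record) : List Bool := L.map RElem.isNonDecision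

theorem Record.decisionWord_lt_append_singleton (L : Record) (e : RElem) :
    L.decisionWord < Record.decisionWord (L ++ [e]) := by
  simpa [Record.decisionWord] using
    List.append_left_lt (l₁ := L.decisionWord) (List.nil_lt_cons e.isNonDecision [])

theorem Record.decisionWord_backtrack_lt (L₁ L₂ : Record) (l l' : Lit) :
    Record.decisionWord (L₁ ++ .lit l true :: L₂) <
      Record.decisionWord (L₁ ++ [.lit l' false]) := by
  simp only [Record.decisionWord, List.map_append, List.map_cons, RElem.isNonDecision]
  exact List.append_left_lt (List.cons_lt_cons_iff.2 (.inl Bool.false_lt_true))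

/-- The measure that every transition increases: the decision words of the two records compared
lexicographically, with the label in between. The label is negated so that `𝓛 < 𝓡`, and the
terminal states `Ok(L)` and `Failstate` lie above all others. -/
def TLState.rank : TLState → WithTop (List Bool ×ₗ Bool ×ₗ List Bool)
  | .st L R b => ↑(toLex (L.decisionWord, toLex (!b, R.decisionWord)))
  | .ok _ => ⊤
  | .fail => ⊤

theorem TLState.rank_st_lt_of_left {L L' : Record} (h : L.decisionWord < L'.decisionWord)
    (R R' : Record) (b b' : Bool) : (TLState.st L R b).rank < (TLState.st L' R' b').rank :=
  WithTop.coe_lt_coe.2 (Prod.Lex.toLex_lt_toLex.2 (.inl h))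

theorem TLState.rank_st_lt_of_right (L : Record) {R R' : Record} (b : Bool)
    (h : R.decisionWord < R'.decisionWord) :
    (TLState.st L R b).rank < (TLState.st L R' b).rank :=
  WithTop.coe_lt_coe.2 (Prod.Lex.toLex_lt_toLex.2
    (.inr ⟨rfl, Prod.Lex.toLex_lt_toLex.2 (.inr ⟨rfl, h⟩)⟩))

theorem TLState.rank_st_true_lt_rank_st_false (L R R' : Record) :
    (TLState.st L R true).rank < (TLState.st L R' false).rank :=
  WithTop.coe_lt_coe.2 (Prod.Lex.toLex_lt_toLex.2
    (.inr ⟨rfl, Prod.Lex.toLex_lt_toLex.2 (.inl Bool.false_lt_true)⟩))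

theorem tlStep.rank_lt {PL PR : Set PCond} {g : GenFun} {t : WitFun} {π : Prog} {s s' : TLState}
    (h : tlStep PL PR g t π s s') : s.rank < s'.rank := by
  cases h with
  | concludeL | concludeR | concludeRL => exact WithTop.coe_lt_top _
  | propagateL | decideL =>
    exact TLState.rank_st_lt_of_left (Record.decisionWord_lt_append_singleton _ _) _ _ _ _
  | backtrackL | backtrackRL =>
    exact TLState.rank_st_lt_of_left (Record.decisionWord_backtrack_lt _ _ _ _) _ _ _ _
  | cross => exact TLState.rank_st_true_lt_rank_st_false _ _ _
  | propagateR | decideR =>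
    exact TLState.rank_st_lt_of_right _ _ (Record.decisionWord_lt_append_singleton _ _)
  | backtrackR => exact TLState.rank_st_lt_of_right _ _ (Record.decisionWord_backtrack_lt _ _ _ _)

end Acyclicity

/-- For any generating function `g`, witness function `t`, sets `Pg`, `Pt` of
p-conditions and program `π`, the two-layer template graph `ST[Pg, Pt, g, t](π)` is finite
and acyclic. -/
theorem statement18 (g : GenFun) (t : WitFun) (hg : isGenFun g) (ht : isWitFun t)
    (Pg Pt : Set PCond) (hpcg : ∀ p ∈ Pg, isPCondition p) (hpct : ∀ p ∈ Pt, isPCondition p)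
    (π : Prog) :
    (TL Pg Pt g t π).nodes.Finite ∧
    ∀ s, ¬ Relation.TransGen (TL Pg Pt g t π).edge s s :=
  ⟨TL.finite_nodes Pg Pt g t π,
    (TL Pg Pt g t π).acyclic_of_step_lt TLState.rank fun _ _ h ↦ h.rank_lt⟩

end AbstractSolvers
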